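/- For every n ≥ 1, the characteristic polynomial of the matrix B_n equals ∏_μ (X² − π′_μ), where the product is over all compositions μ = (μ_1,…,μ_t) of n and π′_μ := ∏_{i=1}^{t−1} (μ_i + 1) (an empty product being 1). Equivalently, the eigenvalues of B_n, counted with algebraic multiplicity, are the pairs ±√π′_μ, one pair for each composition μ of n. -/

import Mathlib

/-!
Since `B_{n+1}` is block upper triangular with diagonal blocks `A_n` and `-B_n`, everything reduces
to the characteristic polynomial of `±A_n`, which is shown to be `∏_μ (X² - π_μ)` with
`π_μ = ∏ (μ_i + 1)` over *all* parts of `μ` (`charpoly_Amat_comp`).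

Put `f = (1, -1)` and `g = (0, 1)` and use the basis of `ℤ^(2^n)` formed by the tensor words in
`f` and `g`. With `D = A - B`, appending a letter to a word `v` gives
`A(vf) = (2A - D)(v)g`, `A(vg) = A(v)f + D(v)g`, `D(vf) = A(v)g`, `D(vg) = 0` (`ent_mul_p`).
Let `w̄` be the word `w` with `f` and `g` exchanged. A word occurring in `A(w)` is obtained from `w̄`
by turning into `g` some letters `f` that directly follow a `g`. Such a move either merges runs or
shifts a change of letter to the right, so it lowers the sum of the weights of the letter changes,
where a change counts its distance from the right end (`wt_lt`). This weight is the same for `w`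
and `w̄`, so `A_n` is block triangular, and its graded part only pairs `w` with `w̄`; hence the
characteristic polynomial is the product over the pairs `{w, w̄}` of `X² - c(w) c(w̄)`, with `c(w)`
the coefficient of `w̄` in `A(w)` (`charpoly_of_supp`). The recursion gives
`c(w) = ∏ (r + 1)` over the lengths `r` of the runs of `f` in `w`, so `c(w) c(w̄)` is that product
over all runs (`coeff_mul_coeff`), and the pairs `{w, w̄}` correspond to compositions of `n` through
their run lengths (`prod_runs`).
-/

open Finset

/-- Restriction of a subset of `Fin (n+1)` to `Fin n` (forgetting the top element). -/
def resSet {n : ℕ} (I : Finset (Fin (n + 1))) : Finset (Fin n) :=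
  Finset.univ.filter (fun j : Fin n => Fin.castSucc j ∈ I)

mutual
  /-- The matrix `A_n`, rows/columns indexed by subsets of `{1,…,n}` (element `j`
  of `[n]` corresponds to `j-1 : Fin n`, i.e. anti-lexicographic/binary order). -/
  def Amat : (n : ℕ) → Matrix (Finset (Fin n)) (Finset (Fin n)) ℤ
    | 0 => Matrix.of fun _ _ => 1
    | n + 1 => Matrix.of fun I J =>
        if Fin.last n ∈ I then
          if Fin.last n ∈ J then - Bmat n (resSet I) (resSet J)
          else Amat n (resSet I) (resSet J)
        else Amat n (resSet I) (resSet J)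
  /-- The matrix `B_n`. -/
  def Bmat : (n : ℕ) → Matrix (Finset (Fin n)) (Finset (Fin n)) ℤ
    | 0 => Matrix.of fun _ _ => 1
    | n + 1 => Matrix.of fun I J =>
        if Fin.last n ∈ I then
          if Fin.last n ∈ J then - Bmat n (resSet I) (resSet J)
          else 0
        else Amat n (resSet I) (resSet J)
end

/-- The Walsh-Hadamard matrix `H_n`. -/
def Hmat : (n : ℕ) → Matrix (Finset (Fin n)) (Finset (Fin n)) ℤ
  | 0 => Matrix.of fun _ _ => 1
  | n + 1 => Matrix.of fun I J =>
      if Fin.last n ∈ I ∧ Fin.last n ∈ J then - Hmat n (resSet I) (resSet J)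
      else Hmat n (resSet I) (resSet J)

/-- The Möbius matrix `M_n` of the boolean lattice. -/
def Mobmat (n : ℕ) : Matrix (Finset (Fin n)) (Finset (Fin n)) ℤ :=
  Matrix.of fun I J => if I ⊆ J then (-1) ^ (J \ I).card else 0

/-- The zeta matrix `Z_n` of the boolean lattice. -/
def Zetamat (n : ℕ) : Matrix (Finset (Fin n)) (Finset (Fin n)) ℤ :=
  Matrix.of fun I J => if I ⊆ J then 1 else 0

/-- The subset of `[n] = {1,…,n}` corresponding to a subset of `Fin n`. -/
def natSet {n : ℕ} (I : Finset (Fin n)) : Finset ℕ := Finset.image (fun j : Fin n => (j : ℕ) + 1) I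

/-- The ordinal number of a subset in the anti-lexicographic order. -/
def ordFin {n : ℕ} (I : Finset (Fin n)) : ℕ := ∑ j ∈ I, 2 ^ (j : ℕ)

/-- The run (maximal interval of consecutive integers) of `I` containing `j`
(empty if `j ∉ I`). -/
def runOf (I : Finset ℕ) (j : ℕ) : Finset ℕ :=
  I.filter (fun i => ∀ k ∈ Finset.Icc (min i j) (max i j), k ∈ I)

/-- The set of runs (maximal intervals of consecutive integers) of `I`. -/
def runsOf (I : Finset ℕ) : Finset (Finset ℕ) := I.image (runOf I)

/-- `P` is a prefix of the interval `R`: it consists of an initial segment of `R`. -/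
def IsPrefixOf (P R : Finset ℕ) : Prop :=
  P ⊆ R ∧ ∀ i ∈ R, ∀ j ∈ P, i ≤ j → i ∈ P



namespace AdinRoichman

/-! ### Subsets as words -/

/-- The subset of `Fin (n+1)` whose restriction to `Fin n` is `I` and which contains the top
element iff `x = true`. -/
def snocSet {n : ℕ} (x : Bool) (I : Finset (Fin n)) : Finset (Fin (n + 1)) :=
  Finset.univ.filter fun j =>
    Fin.lastCases (motive := fun _ => Bool) x (fun i => decide (i ∈ I)) j = true

@[simp] lemma last_mem_snocSet {n : ℕ} (x : Bool) (I : Finset (Fin n)) :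
    Fin.last n ∈ snocSet x I ↔ x = true := by
  simp [snocSet]

@[simp] lemma castSucc_mem_snocSet {n : ℕ} (x : Bool) (I : Finset (Fin n)) (i : Fin n) :
    i.castSucc ∈ snocSet x I ↔ i ∈ I := by
  simp [snocSet]

@[simp] lemma resSet_snocSet {n : ℕ} (x : Bool) (I : Finset (Fin n)) :
    resSet (snocSet x I) = I := by
  ext i; simp [resSet]

lemma compl_snocSet {n : ℕ} (x : Bool) (I : Finset (Fin n)) :
    (snocSet x I)ᶜ = snocSet (!x) Iᶜ := by
  ext i
  induction i using Fin.lastCases <;> simp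

/-- Subsets of `Fin (n+1)` as pairs (membership of the top element, restriction). -/
def snocEquiv (n : ℕ) : Bool × Finset (Fin n) ≃ Finset (Fin (n + 1)) where
  toFun p := snocSet p.1 p.2
  invFun K := (decide (Fin.last n ∈ K), resSet K)
  left_inv p := by simp
  right_inv K := by
    ext i
    induction i using Fin.lastCases <;> simp [resSet]

/-- The indicator word of `I`, read from the top element down. -/
def word : (n : ℕ) → Finset (Fin n) → List Bool
  | 0, _ => []
  | n + 1, I => decide (Fin.last n ∈ I) :: word n (resSet I)

@[simp] lemma word_snocSet {n : ℕ} (x : Bool) (I : Finset (Fin n)) :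
    word (n + 1) (snocSet x I) = x :: word n I := by
  simp [word]

lemma word_injective (n : ℕ) : Function.Injective (word n) := by
  induction n with
  | zero => intro I J _; exact Subsingleton.elim _ _
  | succ n ih =>
    intro I J h
    obtain ⟨⟨x, I⟩, rfl⟩ := (snocEquiv n).surjective I
    obtain ⟨⟨y, J⟩, rfl⟩ := (snocEquiv n).surjective J
    simp only [snocEquiv, Equiv.coe_fn_mk, word_snocSet, List.cons.injEq] at h
    rw [h.1, ih h.2]

lemma word_compl (n : ℕ) (I : Finset (Fin n)) : word n Iᶜ = (word n I).map not := by
  induction n with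
  | zero => rfl
  | succ n ih =>
    obtain ⟨⟨x, I⟩, rfl⟩ := (snocEquiv n).surjective I
    simp [snocEquiv, compl_snocSet, ih]

lemma sum_word_succ {n : ℕ} (F : List Bool → ℤ) :
    ∑ K, F (word (n + 1) K) = ∑ K, F (true :: word n K) + ∑ K, F (false :: word n K) := by
  rw [← (snocEquiv n).sum_comp, Fintype.sum_prod_type]
  simp [snocEquiv]

lemma prod_word_succ {n : ℕ} {M : Type*} [CommMonoid M] (F : List Bool → M) :
    ∏ K, F (word (n + 1) K) = (∏ K, F (true :: word n K)) * ∏ K, F (false :: word n K) := by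
  rw [← (snocEquiv n).prod_comp, Fintype.prod_prod_type]
  simp [snocEquiv]

/-! ### Change of basis -/

mutual
  /-- Entries of `A_n` in terms of indicator words. -/
  def aEnt : List Bool → List Bool → ℤ
    | [], [] => 1
    | true :: u, true :: v => - bEnt u v
    | true :: u, false :: v => aEnt u v
    | false :: u, _ :: v => aEnt u v
    | _, _ => 0
  /-- Entries of `B_n` in terms of indicator words. -/
  def bEnt : List Bool → List Bool → ℤ
    | [], [] => 1
    | true :: u, true :: v => - bEnt u v
    | false :: u, _ :: v => aEnt u v
    | _, _ => 0
end

lemma mat_eq_ent (n : ℕ) (I J : Finset (Fin n)) :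
    Amat n I J = aEnt (word n I) (word n J) ∧ Bmat n I J = bEnt (word n I) (word n J) := by
  induction n with
  | zero => simp [Amat, Bmat, word, aEnt, bEnt]
  | succ n ih =>
    obtain ⟨⟨x, I⟩, rfl⟩ := (snocEquiv n).surjective I
    obtain ⟨⟨y, J⟩, rfl⟩ := (snocEquiv n).surjective J
    cases x <;> cases y <;> simp [snocEquiv, Amat, Bmat, aEnt, bEnt, ih]

/-- Entries of the `n`-fold tensor power of `[[1, 0], [-1, 1]]` (index `false` first): its columns
are the tensor words in `f = (1, -1)`, coded by `false`, and `g = (0, 1)`, coded by `true`. -/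
def pEnt : List Bool → List Bool → ℤ
  | [], [] => 1
  | true :: u, true :: v => pEnt u v
  | true :: u, false :: v => - pEnt u v
  | false :: u, false :: v => pEnt u v
  | _, _ => 0

/-- Entries of the `n`-fold tensor power of `[[1, 0], [1, 1]]`, the inverse of `pEnt`. -/
def qEnt : List Bool → List Bool → ℤ
  | [], [] => 1
  | true :: u, true :: v => qEnt u v
  | true :: u, false :: v => qEnt u v
  | false :: u, false :: v => qEnt u v
  | _, _ => 0

/-- `tW true` and `tW false` are the entries of `A_n` and of `A_n - B_n` in the basis of tensor
words in `f` and `g`: row word first, column word second. -/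
def tW : Bool → List Bool → List Bool → ℤ
  | true, [], [] => 1
  | true, true :: u, false :: v => 2 * tW true u v - tW false u v
  | true, false :: u, true :: v => tW true u v
  | true, true :: u, true :: v => tW false u v
  | false, true :: u, false :: v => tW true u v
  | _, _, _ => 0

lemma q_mul_p (n : ℕ) (I J : Finset (Fin n)) :
    ∑ K, qEnt (word n I) (word n K) * pEnt (word n K) (word n J) = if I = J then 1 else 0 := by
  induction n with
  | zero => simp [word, qEnt, pEnt, Subsingleton.elim I J]
  | succ n ih =>
    obtain ⟨⟨x, I⟩, rfl⟩ := (snocEquiv n).surjective I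
    obtain ⟨⟨y, J⟩, rfl⟩ := (snocEquiv n).surjective J
    have := ih I J
    rw [sum_word_succ fun K => qEnt (word (n + 1) _) K * pEnt K (word (n + 1) _)]
    simp only [(snocEquiv n).injective.eq_iff, Prod.mk.injEq]
    cases x <;> cases y <;> simp [snocEquiv, qEnt, pEnt, this]

/-- The change of basis: `A P = P T` and `B P = P (T - T')`, where `P`, `T`, `T'` have entries
`pEnt`, `tW true`, `tW false`. The claim on `B` is needed to carry the induction. -/
lemma ent_mul_p (n : ℕ) (I J : Finset (Fin n)) :
    (∑ K, aEnt (word n I) (word n K) * pEnt (word n K) (word n J) =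
      ∑ K, pEnt (word n I) (word n K) * tW true (word n K) (word n J)) ∧
    (∑ K, bEnt (word n I) (word n K) * pEnt (word n K) (word n J) =
      ∑ K, pEnt (word n I) (word n K) * (tW true (word n K) (word n J) - tW false (word n K) (word n J))) := by
  induction n with
  | zero => simp [word, aEnt, bEnt, pEnt, tW]
  | succ n ih =>
    obtain ⟨⟨x, I⟩, rfl⟩ := (snocEquiv n).surjective I
    obtain ⟨⟨y, J⟩, rfl⟩ := (snocEquiv n).surjective J
    obtain ⟨h1, h2⟩ := ih I J
    rw [sum_word_succ fun K => aEnt (word (n + 1) _) K * pEnt K (word (n + 1) _),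
      sum_word_succ fun K => bEnt (word (n + 1) _) K * pEnt K (word (n + 1) _),
      sum_word_succ fun K => pEnt (word (n + 1) _) K * tW true K (word (n + 1) _),
      sum_word_succ fun K => pEnt (word (n + 1) _) K *
        (tW true K (word (n + 1) _) - tW false K (word (n + 1) _))]
    simp only [mul_sub, sum_sub_distrib] at h2
    cases x <;> cases y <;>
      simp [snocEquiv, aEnt, bEnt, pEnt, tW, mul_sub, mul_left_comm _ (2 : ℤ), ← mul_sum,
        h1, h2] <;> ring_nf <;> trivial

/-- The matrix of `A_n` in the basis of tensor words. -/
def Wmat (n : ℕ) : Matrix (Finset (Fin n)) (Finset (Fin n)) ℤ :=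
  Matrix.of fun I J => tW true (word n I) (word n J)

lemma exists_conj (n : ℕ) : ∃ P Q : Matrix (Finset (Fin n)) (Finset (Fin n)) ℤ,
    Q * P = 1 ∧ Amat n * P = P * Wmat n := by
  refine ⟨Matrix.of fun I J => pEnt (word n I) (word n J),
    Matrix.of fun I J => qEnt (word n I) (word n J), ?_, ?_⟩
  · ext I J
    simpa [Matrix.mul_apply, Matrix.one_apply] using q_mul_p n I J
  · ext I J
    simpa [Matrix.mul_apply, Wmat, (mat_eq_ent n _ _).1] using (ent_mul_p n I J).1

lemma charpoly_Amat (n : ℕ) : (Amat n).charpoly = (Wmat n).charpoly := by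
  obtain ⟨P, Q, h1, h2⟩ := exists_conj n
  have h3 : P * Q = 1 := mul_eq_one_comm.mp h1
  have : Amat n = P * Wmat n * Q := by rw [← h2, mul_assoc, h3, mul_one]
  rw [this, mul_assoc, Matrix.charpoly_mul_comm, mul_assoc, h1, mul_one]

lemma charpoly_neg_Amat (n : ℕ) : (-Amat n).charpoly = (-Wmat n).charpoly := by
  obtain ⟨P, Q, h1, h2⟩ := exists_conj n
  have h3 : P * Q = 1 := mul_eq_one_comm.mp h1
  have : -Amat n = P * -Wmat n * Q := by
    rw [mul_neg, ← h2, neg_mul, mul_assoc, h3, mul_one]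
  rw [this, mul_assoc, Matrix.charpoly_mul_comm, mul_assoc, h1, mul_one]

/-! ### Triangularity -/

/-- Weighted number of letter changes of a word: a change between positions `i` and `i+1`
(counted from `0`) has weight `k + i`. -/
def wt : ℕ → List Bool → ℕ
  | k, x :: y :: v => (if x = y then 0 else k) + wt (k + 1) (y :: v)
  | _, _ => 0

lemma wt_compl (k : ℕ) (w : List Bool) : wt k (w.map not) = wt k w := by
  induction w generalizing k with
  | nil => rfl
  | cons x v ih =>
    cases v with
    | nil => rfl
    | cons y v =>
      have := ih (k + 1)
      simp only [List.map_cons] at this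
      cases x <;> cases y <;> simpa [wt] using this

/-- A word `w'` occurring in `A(w)` is the complement of `w` or has smaller weight than it, and
this persists after adding any letter `z` on the right, that is, at the head of the list. The same
holds for `D = A - B`; there, moreover, the comparison is strict when `g` is appended to `w'` and
`f` to the complement of `w`, which is how `D` arises in the recursion for `A`. -/
lemma wt_lt (w' w : List Bool) :
    (tW true w' w ≠ 0 → ∀ z k, w' = w.map not ∨ wt k (z :: w') < wt k (z :: w.map not)) ∧
    (tW false w' w ≠ 0 →
      (∀ z k, w' = w.map not ∨ wt k (z :: w') < wt k (z :: w.map not)) ∧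
      ∀ z k, wt k (z :: true :: w') < wt k (z :: false :: w.map not)) := by
  induction w' generalizing w with
  | nil => cases w <;> simp [tW]
  | cons x u ih =>
    cases w with
    | nil => simp [tW]
    | cons y v =>
      obtain ⟨h1, h2⟩ := ih v
      cases x <;> cases y <;> simp only [tW, ne_eq, not_true_eq_false, false_imp_iff, and_true]
      · intro h z k
        have := h1 h false (k + 1)
        simp only [wt, List.map_cons, Bool.not_true, List.cons.injEq, true_and]
        grind
      · refine ⟨fun h z k => ?_, fun h => ⟨fun z k => ?_, fun z k => ?_⟩⟩
        · have : u = v.map not ∨ wt (k + 1) (true :: u) < wt (k + 1) (true :: v.map not) := by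
            by_cases ha : tW true u v = 0
            · exact (h2 (by intro hd; simp [ha, hd] at h)).1 _ _
            · exact h1 ha _ _
          simp only [wt, List.map_cons, Bool.not_false, List.cons.injEq, true_and]
          grind
        · have := h1 h true (k + 1)
          simp only [wt, List.map_cons, Bool.not_false, List.cons.injEq, true_and]
          grind
        · have := h1 h true (k + 2)
          simp only [wt, List.map_cons, Bool.not_false]
          have h5 : wt (k + 1 + 1) (true :: u) ≤ wt (k + 1 + 1) (true :: v.map not) := by
            rcases this with h | h
            · rw [h]
            · exact h.le
          cases z <;> simp <;> omega
      · intro h z k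
        right
        simpa using (h2 h).2 z k

/-- The weight of the indicator word of a subset. The extra head letter carries weight `0`, so
that its choice is immaterial and the weight is invariant under complementation. -/
def rk (n : ℕ) (I : Finset (Fin n)) : ℕ := wt 0 (true :: word n I)

lemma wt_zero_cons (z z' : Bool) (w : List Bool) : wt 0 (z :: w) = wt 0 (z' :: w) := by
  cases w <;> simp [wt]

lemma rk_compl (n : ℕ) (I : Finset (Fin n)) : rk n Iᶜ = rk n I := by
  rw [rk, wt_zero_cons _ false, rk, word_compl, ← wt_compl 0 (true :: _)]
  rfl

lemma Wmat_supp (n : ℕ) (I J : Finset (Fin n)) (h : Wmat n I J ≠ 0) :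
    I = Jᶜ ∨ rk n I < rk n J := by
  rw [← rk_compl n J, rk, rk, word_compl]
  rcases (wt_lt (word n I) (word n J)).1 h true 0 with h | h
  · left
    apply word_injective
    rw [word_compl, h]
  · exact Or.inr h

open Polynomial in
/-- If `M` is strictly triangular for a complement-invariant rank `b` up to entries in positions
`(Jᶜ, J)`, only these entries contribute to the characteristic polynomial, and they form a `2 × 2`
block for each pair `{J, Jᶜ}`, here represented by its member without the top element. -/
lemma charpoly_of_supp {n : ℕ} (M : Matrix (Finset (Fin (n + 1))) (Finset (Fin (n + 1))) ℤ)
    (b : Finset (Fin (n + 1)) → ℕ) (hb : ∀ I, b Iᶜ = b I)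
    (hM : ∀ I J, M I J ≠ 0 → I = Jᶜ ∨ b I < b J) :
    M.charpoly = ∏ I : Finset (Fin n),
      (X ^ 2 - C (M (snocSet false I) (snocSet false I)ᶜ * M (snocSet false I)ᶜ (snocSet false I))) := by
  set N : Matrix (Finset (Fin (n + 1))) (Finset (Fin (n + 1))) ℤ :=
    Matrix.of fun I J => if I = Jᶜ then M I J else 0 with hN
  have tM : M.BlockTriangular b := by
    intro I J hlt
    by_contra h
    rcases hM I J h with rfl | h
    · rw [hb] at hlt; omega
    · omega
  have tN : N.BlockTriangular b := by
    intro I J hlt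
    simp only [hN, Matrix.of_apply, ite_eq_right_iff]
    exact fun _ => tM hlt
  -- The diagonal blocks (of equal rank) of `M` and of its graded part `N` coincide.
  have e1 : M.charpoly = N.charpoly := by
    rw [Matrix.charpoly, Matrix.charpoly, tM.charmatrix.det, tN.charmatrix.det]
    refine Finset.prod_congr rfl fun a _ => ?_
    congr 1
    ext1 ⟨I, hI⟩ ⟨J, hJ⟩
    have : M I J = N I J := by
      simp only [hN, Matrix.of_apply]
      split_ifs with h
      · rfl
      · by_contra h0
        rcases hM I J h0 with h1 | h1
        · exact h h1
        · omega
    simp [Matrix.toSquareBlock_def, Matrix.charmatrix_apply, this]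
  -- `(x, I)` runs through the pair represented by `I`; in these coordinates `N` is block diagonal.
  let e : Bool × Finset (Fin n) ≃ Finset (Fin (n + 1)) :=
    { toFun := fun p => bif p.1 then (snocSet false p.2)ᶜ else snocSet false p.2
      invFun := fun K => (decide (Fin.last n ∈ K),
        if Fin.last n ∈ K then resSet Kᶜ else resSet K)
      left_inv := by rintro ⟨x, I⟩; cases x <;> simp
      right_inv := by
        intro K
        obtain ⟨⟨x, I⟩, rfl⟩ := (snocEquiv n).surjective K
        cases x <;> simp [snocEquiv, compl_snocSet] }
  have hinj : ∀ I J : Finset (Fin n), snocSet false I = snocSet false J ↔ I = J := by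
    intro I J
    exact ⟨fun h => by simpa using congrArg resSet h, fun h => h ▸ rfl⟩
  have hne : ∀ I J : Finset (Fin n), snocSet false I ≠ (snocSet false J)ᶜ := by
    intro I J h
    have := congrArg (Fin.last n ∈ ·) h
    simp at this
  have hne' : ∀ I J : Finset (Fin n), (snocSet false J)ᶜ ≠ snocSet false I :=
    fun I J h => hne I J h.symm
  have e2 : N.charmatrix.submatrix e e = Matrix.blockDiagonal fun I : Finset (Fin n) =>
      Matrix.of fun x y : Bool => bif (x == y) then (X : ℤ[X]) else
        bif x then - C (M (snocSet false I)ᶜ (snocSet false I))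
        else - C (M (snocSet false I) (snocSet false I)ᶜ) := by
    ext1 ⟨x, I⟩ ⟨y, J⟩
    by_cases hIJ : I = J
    · subst hIJ
      cases x <;> cases y <;>
        simp [e, Matrix.blockDiagonal_apply, hN, hne, hne',
          Matrix.diagonal_apply]
    · cases x <;> cases y <;>
        simp [e, Matrix.blockDiagonal_apply, hN, hne, hne', hIJ,
          Matrix.diagonal_apply, hinj]
  rw [e1, Matrix.charpoly, ← Matrix.det_submatrix_equiv_self e, e2, Matrix.det_blockDiagonal]
  refine Finset.prod_congr rfl fun I _ => ?_
  rw [← Matrix.det_submatrix_equiv_self finTwoEquiv, Matrix.det_fin_two]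
  simp [finTwoEquiv]
  ring

/-! ### Runs and compositions -/

/-- Increase the first entry of a list by one. -/
def incHead : List ℕ → List ℕ
  | [] => []
  | a :: l => (a + 1) :: l

/-- Lengths of the runs of a word. -/
def runs : List Bool → List ℕ
  | [] => []
  | [_] => [1]
  | x :: y :: v => if x = y then incHead (runs (y :: v)) else 1 :: runs (y :: v)

/-- The product of `r + 1` over the entries `r` of a list. -/
def succProd (l : List ℕ) : ℤ := (l.map fun i : ℕ => (i : ℤ) + 1).prod

lemma runs_compl (w : List Bool) : runs (w.map not) = runs w := by
  induction w with
  | nil => rfl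
  | cons x v ih =>
    cases v with
    | nil => rfl
    | cons y v =>
      simp only [List.map_cons] at ih
      cases x <;> cases y <;> simp_all [runs]

lemma runs_cons_ne_nil (x : Bool) (v : List Bool) : runs (x :: v) ≠ [] := by
  induction v generalizing x with
  | nil => simp [runs]
  | cons y v ih =>
    have := ih y
    simp only [runs]
    split_ifs
    · cases h : runs (y :: v) <;> simp_all [incHead]
    · simp

/-- The product `c(w) c(w̄)` for a word `w` ending in `f`. The second part, which gives the product
with the coefficient of `D = A - B` instead, is needed for the induction. -/
lemma coeff_mul_coeff (v : List Bool) :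
    (tW true (true :: v.map not) (false :: v) * tW true (false :: v) (true :: v.map not) =
      succProd (runs (false :: v)) ∧
    tW false (true :: v.map not) (false :: v) * tW true (false :: v) (true :: v.map not) =
      succProd (runs (false :: v)) - succProd (runs (false :: v)).tail) := by
  -- The claim for `v` and for its complement are carried together, since adding a letter `g`
  -- relates one to the other.
  suffices H : ∀ v : List Bool, (
    (tW true (true :: v.map not) (false :: v) * tW true (false :: v) (true :: v.map not) =
      succProd (runs (false :: v)) ∧
    tW false (true :: v.map not) (false :: v) * tW true (false :: v) (true :: v.map not) =
      succProd (runs (false :: v)) - succProd (runs (false :: v)).tail)) ∧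
    (tW true (true :: v) (false :: v.map not) * tW true (false :: v.map not) (true :: v) =
      succProd (runs (true :: v)) ∧
    tW false (true :: v) (false :: v.map not) * tW true (false :: v.map not) (true :: v) =
      succProd (runs (true :: v)) - succProd (runs (true :: v)).tail) from (H v).1
  intro v
  induction v with
  | nil => simp [tW, runs, succProd]
  | cons y v ih =>
    obtain ⟨⟨h1, h2⟩, h3, h4⟩ := ih
    obtain ⟨a, l, hl⟩ := List.exists_cons_of_ne_nil (runs_cons_ne_nil false v)
    obtain ⟨a', l', hl'⟩ := List.exists_cons_of_ne_nil (runs_cons_ne_nil true v)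
    cases y
    · simp only [tW, runs, hl, incHead, succProd, List.map_cons, List.prod_cons,
        List.tail_cons, Bool.not_false, Bool.false_eq_true, Bool.true_eq_false, if_true, if_false]
        at *
      push_cast
      refine ⟨⟨?_, ?_⟩, ?_, ?_⟩ <;> linarith
    · simp only [tW, runs, hl', incHead, succProd, List.map_cons, List.prod_cons,
        List.tail_cons, Bool.not_true, Bool.false_eq_true, Bool.true_eq_false, if_true, if_false]
        at *
      push_cast
      refine ⟨⟨?_, ?_⟩, ?_, ?_⟩ <;> linarith

open Polynomial in
lemma charpoly_Wmat (n : ℕ) :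
    (Wmat (n + 1)).charpoly =
      ∏ I : Finset (Fin n), (X ^ 2 - C (succProd (runs (false :: word n I)))) ∧
    (-Wmat (n + 1)).charpoly =
      ∏ I : Finset (Fin n), (X ^ 2 - C (succProd (runs (false :: word n I)))) := by
  have key : ∀ I : Finset (Fin n), Wmat (n + 1) (snocSet false I) (snocSet false I)ᶜ *
      Wmat (n + 1) (snocSet false I)ᶜ (snocSet false I) = succProd (runs (false :: word n I)) := by
    intro I
    rw [mul_comm, ← (coeff_mul_coeff (word n I)).1]
    simp [Wmat, word_compl]
  constructor
  · rw [charpoly_of_supp _ (rk (n + 1)) (rk_compl _) (Wmat_supp _)]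
    simp_rw [key]
  · rw [charpoly_of_supp _ (rk (n + 1)) (rk_compl _)
      (fun I J h => Wmat_supp _ I J (by simpa using h))]
    simp only [Matrix.neg_apply, neg_mul_neg, key]

/-- The composition of `n + 2` obtained from one of `n + 1` by prepending a part `1` (`false`) or
increasing the first part (`true`). -/
def compStep (n : ℕ) (p : Bool × Composition (n + 1)) : Composition (n + 2) where
  blocks := bif p.1 then incHead p.2.blocks else 1 :: p.2.blocks
  blocks_pos := by
    obtain ⟨x, c⟩ := p
    intro i hi
    have := @c.blocks_pos
    cases x
    · simp at hi
      rcases hi with rfl | hi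
      · exact one_pos
      · exact this hi
    · cases h : c.blocks <;> simp_all [incHead]
      rcases hi with rfl | hi
      · omega
      · exact this.2 _ hi
  blocks_sum := by
    obtain ⟨x, c⟩ := p
    have := c.blocks_sum
    cases x
    · simp; omega
    · cases h : c.blocks <;> simp_all [incHead]; omega

lemma compStep_bijective (n : ℕ) : Function.Bijective (compStep n) := by
  constructor
  · rintro ⟨x, c⟩ ⟨y, d⟩ h
    have h := congrArg Composition.blocks h
    have hc := @c.blocks_pos
    have hd := @d.blocks_pos
    have hc' := c.blocks_sum
    have hd' := d.blocks_sum
    simp only [Prod.mk.injEq, Composition.ext_iff]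
    cases x <;> cases y <;> cases h1 : c.blocks <;> cases h2 : d.blocks <;>
      simp_all [compStep, incHead]
  · intro c
    have hc := @c.blocks_pos
    have hs := c.blocks_sum
    cases h : c.blocks with
    | nil => simp [h] at hs
    | cons a l =>
      rw [h] at hs hc
      simp only [List.sum_cons] at hs
      by_cases ha : a = 1
      · refine ⟨(false, ⟨l, fun hi => hc (List.mem_cons_of_mem _ hi), by omega⟩), ?_⟩
        ext1
        simp [compStep, h, ha]
      · have ha0 : 0 < a := hc (by simp)
        refine ⟨(true, ⟨(a - 1) :: l, ?_, by simp; omega⟩), ?_⟩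
        · intro i hi
          rcases List.mem_cons.1 hi with rfl | hi
          · omega
          · exact hc (List.mem_cons_of_mem _ hi)
        · ext1
          simp [compStep, h, incHead]
          omega

lemma prod_comp_succ {M : Type*} [CommMonoid M] (n : ℕ) (F : List ℕ → M) :
    ∏ c : Composition (n + 2), F c.blocks =
      (∏ c : Composition (n + 1), F (incHead c.blocks)) *
        ∏ c : Composition (n + 1), F (1 :: c.blocks) := by
  rw [← (compStep_bijective n).prod_comp, Fintype.prod_prod_type]
  simp [compStep]

lemma prod_comp_one {M : Type*} [CommMonoid M] (F : List ℕ → M) :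
    ∏ c : Composition 1, F c.blocks = F [1] := by
  have : Fintype.card (Composition 1) = 1 := by simp [composition_card]
  obtain ⟨x, hx⟩ := Fintype.card_eq_one_iff.1 this
  have h1 : x = Composition.single 1 one_pos := (hx _).symm
  rw [Fintype.prod_eq_single x (fun y hy => (hy (hx y)).elim), h1]
  simp

lemma prod_runs {M : Type*} [CommMonoid M] (n : ℕ) (F : List ℕ → M) :
    ∏ I : Finset (Fin n), F (runs (false :: word n I)) = ∏ c : Composition (n + 1), F c.blocks := by
  induction n generalizing F with
  | zero => rw [prod_comp_one]; simp [word, runs]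
  | succ n ih =>
    rw [prod_comp_succ, ← ih fun l => F (incHead l), ← ih fun l => F (1 :: l),
      prod_word_succ fun w => F (runs (false :: w)), mul_comm]
    congr 1
    rw [← Equiv.prod_comp (Equiv.mk compl compl compl_compl compl_compl :
      Finset (Fin n) ≃ Finset (Fin n))]
    refine Finset.prod_congr rfl fun I _ => ?_
    have := runs_compl (false :: word n I)
    simp only [List.map_cons, Bool.not_false] at this
    simp [runs, word_compl, this]

/-! ### The characteristic polynomials -/

open Polynomial in
lemma charpoly_Amat_comp (n : ℕ) :
    (Amat (n + 1)).charpoly = ∏ c : Composition (n + 1), (X ^ 2 - C (succProd c.blocks)) ∧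
    (-Amat (n + 1)).charpoly = ∏ c : Composition (n + 1), (X ^ 2 - C (succProd c.blocks)) := by
  rw [charpoly_Amat, charpoly_neg_Amat, (charpoly_Wmat n).1, (charpoly_Wmat n).2,
    prod_runs n fun l => X ^ 2 - C (succProd l)]
  exact ⟨rfl, rfl⟩

lemma charpoly_Bmat_succ (n : ℕ) :
    (Bmat (n + 1)).charpoly = (Amat n).charpoly * (-Bmat n).charpoly ∧
    (-Bmat (n + 1)).charpoly = (-Amat n).charpoly * (Bmat n).charpoly := by
  let e : Finset (Fin n) ⊕ Finset (Fin n) ≃ Finset (Fin (n + 1)) :=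
    (Equiv.boolProdEquivSum _).symm.trans (snocEquiv n)
  have h : Bmat (n + 1) =
      Matrix.reindex e e (Matrix.fromBlocks (Amat n) (Amat n) 0 (-Bmat n)) := by
    rw [← Equiv.symm_apply_eq]
    ext I J
    rcases I with I | I <;> rcases J with J | J <;> simp [e, snocEquiv, Bmat]
  have h' : -Bmat (n + 1) =
      Matrix.reindex e e (Matrix.fromBlocks (-Amat n) (-Amat n) 0 (Bmat n)) := by
    rw [h]
    ext I J
    rcases h1 : e.symm I with I | I <;> rcases h2 : e.symm J with J | J <;> simp [h1, h2]
  rw [h', h, Matrix.charpoly_reindex, Matrix.charpoly_reindex,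
    Matrix.charpoly_fromBlocks_zero₂₁, Matrix.charpoly_fromBlocks_zero₂₁]
  exact ⟨rfl, rfl⟩

open Polynomial in
/-- The formula for `B`, with the first part instead of the last one omitted. The sign is carried
along because `B_{n+1}` involves `-B_n`. -/
lemma charpoly_Bmat (n : ℕ) :
    (Bmat (n + 1)).charpoly = ∏ c : Composition (n + 1), (X ^ 2 - C (succProd c.blocks.tail)) ∧
    (-Bmat (n + 1)).charpoly =
      ∏ c : Composition (n + 1), (X ^ 2 - C (succProd c.blocks.tail)) := by
  induction n with
  | zero =>
    rw [(charpoly_Bmat_succ 0).1, (charpoly_Bmat_succ 0).2,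
      prod_comp_one fun l => X ^ 2 - C (succProd l.tail)]
    simp [Matrix.charpoly, Matrix.det_unique, Amat, Bmat, succProd]
    constructor <;> ring
  | succ n ih =>
    have hinc : ∀ l : List ℕ, (incHead l).tail = l.tail := by rintro (_ | _) <;> rfl
    rw [(charpoly_Bmat_succ (n + 1)).1, (charpoly_Bmat_succ (n + 1)).2, (charpoly_Amat_comp n).1,
      (charpoly_Amat_comp n).2, ih.1, ih.2, prod_comp_succ n fun l => X ^ 2 - C (succProd l.tail)]
    simp only [hinc, List.tail_cons]
    rw [mul_comm]
    exact ⟨rfl, rfl⟩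

end AdinRoichman

/-- **G. Alon.** The characteristic polynomial of `B_n` is
`∏_μ (X² − π′_μ)`, the product over all compositions `μ` of `n`, where
`π′_μ = ∏_{i<t} (μᵢ + 1)` omits the last component. -/
theorem charpolyB (n : ℕ) (hn : 1 ≤ n) :
    (Bmat n).charpoly =
      ∏ μ : Composition n,
        (Polynomial.X ^ 2 -
          Polynomial.C ((μ.blocks.dropLast.map (fun i => (i : ℤ) + 1)).prod)) := by
  obtain ⟨n, rfl⟩ := Nat.exists_eq_add_of_le' hn
  -- Reversal turns omission of the first part into omission of the last one.
  rw [(AdinRoichman.charpoly_Bmat n).1, ← Composition.reverse_bijective.prod_comp]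
  refine Finset.prod_congr rfl fun c _ => ?_
  have : c.reverse.blocks.tail = c.blocks.dropLast.reverse := by
    simp [Composition.reverse, List.tail_reverse]
  rw [AdinRoichman.succProd, this, List.map_reverse, List.prod_reverse]
  -- The statement coerces the list of blocks to `List ℤ` by a monadic lift.
  have h : ∀ l : List ℕ, l.flatMap (fun a : ℕ => [(a : ℤ)]) = l.map (fun a : ℕ => (a : ℤ)) := by
    intro l
    induction l <;> simp_all
  simp [h, Function.comp_def]
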